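/- There exists a constant C > 0 such that for every Schwartz function u : ℝ³ → ℝ one has ‖u‖_{L^∞(ℝ³)} ≤ C·‖∇u‖_{L²(ℝ³)}^{1/2}·‖∇²u‖_{L²(ℝ³)}^{1/2}, where ∇²u denotes the second iterated (Fréchet) derivative of u. -/

import Mathlib

open MeasureTheory

/-- Three-dimensional Euclidean space. -/
noncomputable abbrev E3 : Type := EuclideanSpace ℝ (Fin 3)

/-- The `L²` norm on `ℝ³`. -/
noncomputable def L2norm {F : Type*} [NormedAddCommGroup F] (f : E3 → F) : ℝ :=
  (∫ x : E3, ‖f x‖ ^ 2) ^ ((1:ℝ)/2)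

open SchwartzMap LineDeriv FourierTransform Set in
theorem aux_fourier (g : SchwartzMap E3 ℂ) (e : E3) (n : ℕ) (ξ : E3) :
    ‖(𝓕 (∂^{fun _ : Fin n => e} g)) ξ‖
      = (2 * Real.pi) ^ n * |inner ℝ ξ e| ^ n * ‖(𝓕 g) ξ‖ := by
  have ht : (fun y : E3 => inner ℝ y e).HasTemperateGrowth := by fun_prop
  induction n with
  | zero => simp
  | succ n ih =>
    rw [iteratedLineDerivOp_succ_left, fourier_lineDerivOp_eq]
    have h2 : Fin.tail (fun _ : Fin (n+1) => e) = fun _ : Fin n => e := rfl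
    rw [h2, SchwartzMap.smul_apply, norm_smul, smulLeftCLM_apply_apply ht, norm_smul, ih]
    simp only [norm_mul, Complex.norm_I, Complex.norm_real, Real.norm_eq_abs,
      abs_of_pos Real.pi_pos, Complex.norm_ofNat]
    ring

theorem aux_sq_int {F : Type*} [NormedAddCommGroup F] [NormedSpace ℝ F] (g : SchwartzMap E3 F) (n : ℕ) :
    Integrable (fun x => ‖iteratedFDeriv ℝ n g x‖ ^ 2) := by
  have h := g.integrable_pow_mul_iteratedFDeriv volume 0 n
  simp only [pow_zero, one_mul] at h
  obtain ⟨C, hC⟩ := g.decay 0 n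
  simp only [pow_zero, one_mul] at hC
  have h' := h.bdd_mul (f := fun x => ‖iteratedFDeriv ℝ n g x‖) (c := C) h.aestronglyMeasurable
    (Filter.Eventually.of_forall fun x => by simpa using hC.2 x)
  refine h'.congr (Filter.Eventually.of_forall fun x => ?_)
  simp [pow_two]

open SchwartzMap LineDeriv FourierTransform Set in
theorem aux_planch (g : SchwartzMap E3 ℂ) (e : E3) (he : ‖e‖ = 1) (n : ℕ) :
    Integrable (fun ξ : E3 => |inner ℝ ξ e| ^ (2*n) * ‖(𝓕 g) ξ‖^2) ∧
    ∫ ξ : E3, |inner ℝ ξ e| ^ (2*n) * ‖(𝓕 g) ξ‖^2 ≤ ∫ x, ‖iteratedFDeriv ℝ n g x‖ ^ 2 := by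
  set h := ∂^{fun _ : Fin n => e} g with hh
  have e0 : ∀ ξ, ‖(𝓕 h) ξ‖^2 = (2 * Real.pi) ^ (2*n) * (|inner ℝ ξ e| ^ (2*n) * ‖(𝓕 g) ξ‖^2) := by
    intro ξ; rw [hh, aux_fourier]; ring
  have hint : Integrable (fun ξ => ‖(𝓕 h) ξ‖^2) := by
    simpa using aux_sq_int (𝓕 h) 0
  have hc : 1 ≤ (2 * Real.pi) ^ (2*n) := one_le_pow₀ (by linarith [Real.pi_gt_three])
  have hint2 : Integrable (fun ξ : E3 => |inner ℝ ξ e| ^ (2*n) * ‖(𝓕 g) ξ‖^2) := by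
    refine (hint.const_mul (((2 * Real.pi) ^ (2*n))⁻¹)).congr (Filter.Eventually.of_forall fun ξ => ?_)
    simp only [e0]
    field_simp
  refine ⟨hint2, ?_⟩
  calc _ ≤ ∫ ξ, ‖(𝓕 h) ξ‖^2 := by
        refine integral_mono hint2 hint fun ξ => ?_
        simp only [e0]
        exact le_mul_of_one_le_left (by positivity) hc
    _ = ∫ x, ‖h x‖^2 := integral_norm_sq_fourier h
    _ ≤ _ := by
        refine integral_mono (by simpa using aux_sq_int h 0) (aux_sq_int g n) fun x => ?_
        simp only
        gcongr
        rw [hh, iteratedLineDerivOp_eq_iteratedFDeriv]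
        refine (ContinuousMultilinearMap.le_opNorm _ _).trans ?_
        simp [he]

open SchwartzMap FourierTransform in
theorem aux_moment (g : SchwartzMap E3 ℂ) :
    (Integrable (fun ξ : E3 => ‖ξ‖ ^ 2 * ‖(𝓕 g) ξ‖^2) ∧
    ∫ ξ : E3, ‖ξ‖ ^ 2 * ‖(𝓕 g) ξ‖^2 ≤ 3 * ∫ x, ‖iteratedFDeriv ℝ 1 g x‖ ^ 2) ∧
    (Integrable (fun ξ : E3 => ‖ξ‖ ^ 4 * ‖(𝓕 g) ξ‖^2) ∧
    ∫ ξ : E3, ‖ξ‖ ^ 4 * ‖(𝓕 g) ξ‖^2 ≤ 9 * ∫ x, ‖iteratedFDeriv ℝ 2 g x‖ ^ 2) := by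
  have P := fun (i : Fin 3) (n : ℕ) => aux_planch g (EuclideanSpace.single i (1:ℝ)) (by simp) n
  have hin : ∀ (ξ : E3) (i : Fin 3), inner ℝ ξ (EuclideanSpace.single i (1:ℝ)) = ξ i := by
    intro ξ i; simp [EuclideanSpace.inner_single_right]
  simp only [hin] at P
  have hn : ∀ ξ : E3, ‖ξ‖^2 = |ξ 0|^2 + |ξ 1|^2+|ξ 2|^2 := by
    intro ξ; rw [EuclideanSpace.norm_sq_eq, Fin.sum_univ_three]; simp
  refine ⟨?_, ?_⟩
  · have a0 := P 0 1
    have a1 := P 1 1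
    have a2 := P 2 1
    simp only [mul_one] at a0 a1 a2
    have I := (a0.1.add a1.1).add a2.1
    have E : (fun ξ : E3 => ‖ξ‖ ^ 2 * ‖(𝓕 g) ξ‖^2) = (fun ξ : E3 => |ξ 0|^2 * ‖(𝓕 g) ξ‖^2 + |ξ 1|^2* ‖(𝓕 g) ξ‖^2 +|ξ 2|^2* ‖(𝓕 g) ξ‖^2) := by
      funext ξ; rw [hn]; ring
    rw [E]
    refine ⟨I, ?_⟩
    have := integral_add (a0.1.add a1.1) a2.1
    have h2 := integral_add a0.1 a1.1
    simp only [Pi.add_apply] at this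
    rw [this, h2]
    linarith [a0.2, a1.2, a2.2]
  · have a0 := P 0 2
    have a1 := P 1 2
    have a2 := P 2 2
    norm_num only [] at a0 a1 a2
    have I := ((a0.1.add a1.1).add a2.1).const_mul 3
    have E : ∀ ξ : E3, ‖ξ‖ ^ 4 * ‖(𝓕 g) ξ‖^2 ≤ 3 * (|ξ 0|^4 * ‖(𝓕 g) ξ‖^2 + |ξ 1|^4* ‖(𝓕 g) ξ‖^2 +|ξ 2|^4* ‖(𝓕 g) ξ‖^2) := by
      intro ξ
      have : ‖ξ‖^4 ≤ 3 * (|ξ 0|^4 + |ξ 1|^4+|ξ 2|^4) := by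
        rw [show ‖ξ‖^4 = (‖ξ‖^2)^2 by ring, hn]
        nlinarith [sq_nonneg (|ξ 0|^2 - |ξ 1|^2), sq_nonneg (|ξ 0|^2 - |ξ 2|^2), sq_nonneg (|ξ 1|^2 - |ξ 2|^2)]
      calc _ ≤ 3 * (|ξ 0|^4 + |ξ 1|^4+|ξ 2|^4) * ‖(𝓕 g) ξ‖^2 := by gcongr
        _ = _ := by ring
    have I2 : Integrable (fun ξ : E3 => ‖ξ‖ ^ 4 * ‖(𝓕 g) ξ‖^2) := by
      refine I.mono' ?_ (Filter.Eventually.of_forall fun ξ => ?_)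
      · have := (𝓕 g).continuous
        exact Continuous.aestronglyMeasurable (by fun_prop)
      · rw [Real.norm_of_nonneg (by positivity)]
        exact E ξ
    refine ⟨I2, ?_⟩
    have := integral_add (a0.1.add a1.1) a2.1
    have h2 := integral_add a0.1 a1.1
    have h3 := integral_mono I2 I E
    rw [integral_const_mul] at h3
    simp only [Pi.add_apply] at this h3
    rw [this, h2] at h3
    linarith [a0.2, a1.2, a2.2]

open Set in
theorem aux_radial {p q : ℝ} (hp : 0 < p) (hq : 0 < q) :
    Integrable (fun ξ : E3 => (q / p^3 * ‖ξ‖^2 + p / q^3 * ‖ξ‖^4)⁻¹) ∧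
    ∫ ξ : E3, (q / p^3 * ‖ξ‖^2 + p / q^3 * ‖ξ‖^4)⁻¹ =
      3 * (volume : Measure E3).real (Metric.ball 0 1) * (Real.pi / 2) * (p * q) := by
  have hd : Module.finrank ℝ E3 = 3 := by simp
  have hc : 0 < p^2/q^2 := by positivity
  have E : EqOn (fun y : ℝ => p^3/q * (1 + (p^2/q^2 * y)^2)⁻¹) (fun y : ℝ => y ^ (Module.finrank ℝ E3 - 1) • (q / p^3 * y^2 + p / q^3 * y^4)⁻¹)  (Ioi 0) := by
    intro y hy
    have hy : 0 < y := hy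
    simp only [hd, smul_eq_mul]
    norm_num only []
    field_simp
  constructor
  · rw [integrable_fun_norm_addHaar volume (f := fun y : ℝ => (q / p^3 * y^2 + p / q^3 * y^4)⁻¹)]
    refine IntegrableOn.congr_fun ?_ E measurableSet_Ioi
    refine Integrable.const_mul ?_ _
    have := (integrableOn_Ioi_comp_mul_left_iff (fun x : ℝ => (1 + x^2)⁻¹) 0 hc).2 integrable_inv_one_add_sq.integrableOn
    exact this
  · rw [integral_fun_norm_addHaar volume (fun y : ℝ => (q / p^3 * y^2 + p / q^3 * y^4)⁻¹)]
    rw [← setIntegral_congr_fun measurableSet_Ioi E, integral_const_mul,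
      integral_comp_mul_left_Ioi (fun x : ℝ => (1 + x^2)⁻¹) 0 hc, mul_zero, integral_Ioi_inv_one_add_sq, hd]
    simp only [Real.arctan_zero, sub_zero, smul_eq_mul, nsmul_eq_mul]
    push_cast
    field_simp

open SchwartzMap FourierTransform in
theorem aux_main (g : SchwartzMap E3 ℂ) {p q : ℝ} (hp : 0 < p) (hq : 0 < q)
    (hA : ∫ x, ‖iteratedFDeriv ℝ 1 g x‖ ^ 2 ≤ p^4)
    (hB : ∫ x, ‖iteratedFDeriv ℝ 2 g x‖ ^ 2 ≤ q^4) (x : E3) :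
    ‖g x‖ ≤ ((3 * (volume : Measure E3).real (Metric.ball 0 1) * (Real.pi / 2)) + 12) * p * q := by
  obtain ⟨⟨i1, h1⟩, i2, h2⟩ := aux_moment g
  obtain ⟨i3, h3⟩ := aux_radial hp hq
  have hx : ‖g x‖ ≤ ∫ ξ, ‖(𝓕 g) ξ‖ := by
    have : g x = (𝓕⁻ (𝓕 g)) x := by rw [FourierTransform.fourierInv_fourier_eq]
    rw [this, fourierInv_coe, Real.fourierInv_eq]
    refine (norm_integral_le_integral_norm _).trans (le_of_eq ?_)
    simp
  have I12 := (i1.const_mul (q/p^3)).add (i2.const_mul (p/q^3))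
  have hle : ∫ ξ, ‖(𝓕 g) ξ‖ ≤ ∫ ξ : E3, ((q / p^3 * ‖ξ‖^2 + p / q^3 * ‖ξ‖^4)⁻¹ +
      (q/p^3 * (‖ξ‖ ^ 2 * ‖(𝓕 g) ξ‖^2) + p/q^3 * (‖ξ‖ ^ 4 * ‖(𝓕 g) ξ‖^2))) := by
    refine integral_mono_ae (𝓕 g).integrable.norm (i3.add I12) ?_
    have h0 : ∀ᵐ ξ : E3, ξ ≠ 0 := by
      simp [ae_iff]
    filter_upwards [h0] with ξ hξ
    have hξ : 0 < ‖ξ‖ := norm_pos_iff.2 hξ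
    set W := q / p^3 * ‖ξ‖^2 + p / q^3 * ‖ξ‖^4 with hW
    have hWp : 0 < W := by positivity
    have e : q/p^3 * (‖ξ‖ ^ 2 * ‖(𝓕 g) ξ‖^2) + p/q^3 * (‖ξ‖ ^ 4 * ‖(𝓕 g) ξ‖^2) = W * ‖(𝓕 g) ξ‖^2 := by
      rw [hW]; ring
    rw [e]
    have hz : 0 ≤ ‖(𝓕 g) ξ‖ := norm_nonneg _
    have : W⁻¹ + W * ‖(𝓕 g) ξ‖^2 - ‖(𝓕 g) ξ‖ = W⁻¹ * ((W * ‖(𝓕 g) ξ‖ - 1)^2 + W * ‖(𝓕 g) ξ‖) := by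
      field_simp
      ring
    have h5 : 0 ≤ W⁻¹ * ((W * ‖(𝓕 g) ξ‖ - 1)^2 + W * ‖(𝓕 g) ξ‖) := by positivity
    linarith
  have s1 := integral_add i3 I12
  have s2 := integral_add (i1.const_mul (q/p^3)) (i2.const_mul (p/q^3))
  simp only [Pi.add_apply] at s1
  rw [s1, s2, h3, integral_const_mul, integral_const_mul] at hle
  have t1 : q/p^3 * ∫ ξ : E3, ‖ξ‖ ^ 2 * ‖(𝓕 g) ξ‖^2 ≤ q/p^3 * (3 * p^4) := by
    gcongr; linarith
  have t2 : p/q^3 * ∫ ξ : E3, ‖ξ‖ ^ 4 * ‖(𝓕 g) ξ‖^2 ≤ p/q^3 * (9 * q^4) := by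
    gcongr; linarith
  have t3 : q/p^3 * (3 * p^4) = 3 * (p * q) := by field_simp
  have t4 : p/q^3 * (9 * q^4) = 9 * (p * q) := by field_simp
  linarith

/-- Gagliardo–Nirenberg inequality `‖u‖_∞ ≤ C ‖Du‖_{L²}^{1/2} ‖D²u‖_{L²}^{1/2}` in `ℝ³`. -/
theorem stmt15 :
    ∃ C > (0:ℝ), ∀ u : SchwartzMap E3 ℝ, ∀ x : E3,
      ‖u x‖ ≤ C * (L2norm fun y => iteratedFDeriv ℝ 1 (⇑u) y) ^ ((1:ℝ)/2) *
        (L2norm fun y => iteratedFDeriv ℝ 2 (⇑u) y) ^ ((1:ℝ)/2) := by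
  refine ⟨(3 * (volume : Measure E3).real (Metric.ball 0 1) * (Real.pi / 2)) + 12, by positivity, ?_⟩
  intro u x
  set C := (3 * (volume : Measure E3).real (Metric.ball 0 1) * (Real.pi / 2)) + 12
  set g : SchwartzMap E3 ℂ := SchwartzMap.postcompCLM Complex.ofRealCLM u with hg
  have hgc : (g : E3 → ℂ) = Complex.ofRealLI ∘ u := rfl
  have hn : ∀ (n : ℕ) (y : E3), ‖iteratedFDeriv ℝ n g y‖ = ‖iteratedFDeriv ℝ n u y‖ := by
    intro n y
    rw [hgc]
    exact Complex.ofRealLI.norm_iteratedFDeriv_comp_left (u.smooth n).contDiffAt le_rfl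
  have hgx : ‖g x‖ = ‖u x‖ := by
    rw [hgc]; exact Complex.ofRealLI.norm_map _
  have key : ∀ n : ℕ, 0 ≤ (L2norm fun y => iteratedFDeriv ℝ n (⇑u) y) ^ ((1:ℝ)/2) ∧
      ∫ y, ‖iteratedFDeriv ℝ n g y‖ ^ 2 = ((L2norm fun y => iteratedFDeriv ℝ n (⇑u) y) ^ ((1:ℝ)/2))^4 := by
    intro n
    simp only [hn, L2norm]
    have h0 : 0 ≤ ∫ y, ‖iteratedFDeriv ℝ n u y‖ ^ 2 := by positivity
    refine ⟨by positivity, ?_⟩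
    rw [← Real.rpow_mul h0, ← Real.rpow_natCast, ← Real.rpow_mul h0]
    norm_num
  obtain ⟨p0, hp⟩ := key 1
  obtain ⟨q0, hq⟩ := key 2
  set p := (L2norm fun y => iteratedFDeriv ℝ 1 (⇑u) y) ^ ((1:ℝ)/2)
  set q := (L2norm fun y => iteratedFDeriv ℝ 2 (⇑u) y) ^ ((1:ℝ)/2)
  rw [← hgx]
  have hlim : Filter.Tendsto (fun ε : ℝ => C * (p + ε) * (q + ε)) (nhdsWithin 0 (Set.Ioi 0))
      (nhds (C * p * q)) := by
    have : Continuous (fun ε : ℝ => C * (p + ε) * (q + ε)) := by fun_prop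
    have := this.tendsto 0
    simp only [add_zero] at this
    exact this.mono_left nhdsWithin_le_nhds
  refine ge_of_tendsto hlim ?_
  filter_upwards [self_mem_nhdsWithin] with ε hε
  have hε : 0 < ε := hε
  refine aux_main g (by positivity) (by positivity) ?_ ?_ x
  · rw [hp]; gcongr; linarith
  · rw [hq]; gcongr; linarith
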